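/- arXiv:1609.08751 — 2 statements merged into one kernel-verified Lean document; each statement's English description precedes it below -/
import Mathlib

section
/- Let d ≥ 2 and λ ∈ [0,1). Then there exists a function τ : H₊ → [0,∞) with τ(x) > 0 for every x ∈ H₊ \ {x*} and B[x, τ(x)] ⊆ H₊ for all x ∈ H₊, such that for every compact set K ⊆ H₊ the τ-perturbed Douglas–Rachford iterations starting in K converge to x* uniformly: for every ε > 0 there exists N such that for every n ≥ N, every x ∈ K, and every sequence φ : ℕ → H₊ with φ(0) = x satisfying, for each m, φ(m+1) ∈ B[T y, τ(T y)] for some y ∈ B[φ(m), τ(φ(m))], one has ‖φ(n) − x*‖ ≤ ε. -/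
noncomputable section

open Metric Set Filter

/-- Euclidean space `ℝ^d` with `d = d' + 2 ≥ 2`. -/
abbrev Euc (d : ℕ) := EuclideanSpace ℝ (Fin (d + 2))

/-- The standard basis vectors. -/
def e (d : ℕ) (j : Fin (d + 2)) : Euc d := EuclideanSpace.single j 1

/-- The Douglas–Rachford operator for the unit sphere and the line
`L_λ = {t e₁ + λ e₂}`, given by its explicit formula
`T x = (x₁/‖x‖) e₁ + ((1 − 1/‖x‖) x₂ + λ) e₂ + (1 − 1/‖x‖) ∑_{j=3}^d x_j e_j`. -/
def DR (d : ℕ) (lam : ℝ) (x : Euc d) : Euc d :=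
  (x 0 / ‖x‖) • e d 0 + ((1 - 1 / ‖x‖) * x 1 + lam) • e d 1 +
    ∑ j ∈ Finset.univ.filter (fun j : Fin (d + 2) => 2 ≤ (j : ℕ)),
      ((1 - 1 / ‖x‖) * x j) • e d j

/-- The intersection point `x* = √(1−λ²) e₁ + λ e₂`. -/
def xStar (d : ℕ) (lam : ℝ) : Euc d := Real.sqrt (1 - lam ^ 2) • e d 0 + lam • e d 1

/-- `H₊ = {x : x₁ > 0}`. -/
def Hplus (d : ℕ) : Set (Euc d) := {x | 0 < x 0}

/-- A `σ`-perturbed solution of the iteration `x_{n+1} = T x_n` starting at `x` is a sequence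
`φ : ℕ → H₊` with `φ(0) = x` such that for every `n` there exists
`y ∈ B[φ(n), σ(φ(n))]` with `φ(n+1) ∈ B[T y, σ(T y)]`. -/
def PerturbedSol (d : ℕ) (T : Euc d → Euc d) (σ : Euc d → ℝ) (x : Euc d)
    (φ : ℕ → Euc d) : Prop :=
  φ 0 = x ∧ (∀ n : ℕ, φ n ∈ Hplus d) ∧
    ∀ n : ℕ, ∃ y ∈ closedBall (φ n) (σ (φ n)), φ (n + 1) ∈ closedBall (T y) (σ (T y))

/-! helper material -/

/-- squared distance of `x` to the line -/
def kk (d : ℕ) (lam : ℝ) (x : Euc d) : ℝ := ‖x‖ ^ 2 - x 0 ^ 2 - 2 * lam * x 1 + lam ^ 2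

lemma norm_sq_split (d : ℕ) (x : Euc d) :
    ‖x‖ ^ 2 = x 0 ^ 2 + x 1 ^ 2 + ∑ i : Fin d, x i.succ.succ ^ 2 := by
  rw [EuclideanSpace.real_norm_sq_eq, Fin.sum_univ_succ, Fin.sum_univ_succ]
  simp [add_assoc]

lemma sum_coord (d : ℕ) (a : Fin (d + 2) → ℝ) (i : Fin (d + 2)) :
    (∑ j ∈ Finset.univ.filter (fun j : Fin (d + 2) => 2 ≤ (j : ℕ)), a j • e d j) i =
      if 2 ≤ (i : ℕ) then a i else 0 := by
  rw [WithLp.ofLp_sum, Finset.sum_apply, Finset.sum_filter,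
    Finset.sum_eq_single i]
  · simp [e]
  · intro j _ hj
    simp [e, hj.symm]
  · simp

lemma DR_zero (d : ℕ) (lam : ℝ) (x : Euc d) : DR d lam x 0 = x 0 / ‖x‖ := by
  unfold DR
  rw [PiLp.add_apply, sum_coord]
  simp [e]

lemma DR_one (d : ℕ) (lam : ℝ) (x : Euc d) :
    DR d lam x 1 = (1 - 1 / ‖x‖) * x 1 + lam := by
  unfold DR
  rw [PiLp.add_apply, sum_coord]
  simp [e]

lemma DR_succ (d : ℕ) (lam : ℝ) (x : Euc d) (i : Fin d) :
    DR d lam x i.succ.succ = (1 - 1 / ‖x‖) * x i.succ.succ := by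
  have h1 : i.succ.succ ≠ (1 : Fin (d+2)) := by
    intro h
    have := congrArg Fin.val h
    simp at this
  have h0 : i.succ.succ ≠ (0 : Fin (d+2)) := Fin.succ_ne_zero _
  unfold DR
  rw [PiLp.add_apply, sum_coord]
  simp [e, h1, h0]

lemma kk_lower (d : ℕ) (lam : ℝ) (x : Euc d) : (x 1 - lam) ^ 2 ≤ kk d lam x := by
  have h := norm_sq_split d x
  have : 0 ≤ ∑ i : Fin d, x i.succ.succ ^ 2 := Finset.sum_nonneg fun i _ => sq_nonneg _
  unfold kk; nlinarith

lemma kk_DR (d : ℕ) (lam : ℝ) (x : Euc d) :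
    kk d lam (DR d lam x) = (1 - 1 / ‖x‖) ^ 2 * (‖x‖ ^ 2 - x 0 ^ 2) := by
  have h := norm_sq_split d x
  have h' := norm_sq_split d (DR d lam x)
  simp only [DR_zero, DR_one, DR_succ, mul_pow, ← Finset.mul_sum] at h'
  unfold kk
  rw [h', DR_zero, DR_one]
  have : ∑ i : Fin d, x i.succ.succ ^ 2 = ‖x‖ ^ 2 - x 0 ^ 2 - x 1 ^ 2 := by linarith
  rw [this]; ring

lemma norm_sub_xStar (d : ℕ) (lam : ℝ) (x : Euc d) :
    ‖x - xStar d lam‖ ^ 2 = kk d lam x + (x 0 - Real.sqrt (1 - lam ^ 2)) ^ 2 := by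
  have h := norm_sq_split d x
  have h' := norm_sq_split d (x - xStar d lam)
  have a0 : xStar d lam 0 = Real.sqrt (1 - lam ^ 2) := by simp [xStar, e]
  have a1 : xStar d lam 1 = lam := by simp [xStar, e]
  have a2 : ∀ i : Fin d, xStar d lam i.succ.succ = 0 := by
    intro i
    have h1 : i.succ.succ ≠ (1 : Fin (d+2)) := by
      intro h
      have := congrArg Fin.val h
      simp at this
    have h0 : i.succ.succ ≠ (0 : Fin (d+2)) := Fin.succ_ne_zero _
    simp [xStar, e, h1, h0]
  simp only [PiLp.sub_apply, a0, a1, a2, sub_zero] at h'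
  unfold kk
  rw [h', h]; ring

/-- Lyapunov function -/
def WW (d : ℕ) (lam : ℝ) (x : Euc d) : ℝ :=
  kk d lam x / 2 + x 0 ^ 2 / 4 - (1 - lam ^ 2) / 2 * Real.log (x 0)
    - ((1 - lam ^ 2) / 4 - (1 - lam ^ 2) / 2 * Real.log (Real.sqrt (1 - lam ^ 2)))

def EE (d : ℕ) (lam : ℝ) (x : Euc d) : ℝ :=
  x 0 ^ 2 * ((1 - x 0 ^ 2 - lam ^ 2) ^ 2 + kk d lam x) / 32

lemma WW_lower (d : ℕ) (lam : ℝ) (hm : 0 < 1 - lam ^ 2) (x : Euc d) (hx : x ∈ Hplus d) :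
    ‖x - xStar d lam‖ ^ 2 / 4 ≤ WW d lam x := by
  have hx : 0 < x 0 := hx
  rw [norm_sub_xStar]
  unfold WW
  set m := Real.sqrt (1 - lam ^ 2) with hmd
  have hm0 : 0 < m := Real.sqrt_pos.2 hm
  have hmm : 1 - lam ^ 2 = m ^ 2 := (Real.sq_sqrt hm.le).symm
  rw [hmm]
  have hl : Real.log (x 0) - Real.log m ≤ x 0 / m - 1 := by
    rw [← Real.log_div hx.ne' hm0.ne']
    exact Real.log_le_sub_one_of_pos (by positivity)
  have hk : 0 ≤ kk d lam x := (sq_nonneg _).trans (kk_lower d lam x)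
  have h2 : m ^ 2 * (Real.log (x 0) - Real.log m) ≤ m ^ 2 * (x 0 / m - 1) :=
    mul_le_mul_of_nonneg_left hl (by positivity)
  have h3 : m ^ 2 * (x 0 / m - 1) = m * x 0 - m ^ 2 := by field_simp
  nlinarith

lemma WW_star (d : ℕ) (lam : ℝ) (hm : 0 < 1 - lam ^ 2) : WW d lam (xStar d lam) = 0 := by
  have a0 : xStar d lam 0 = Real.sqrt (1 - lam ^ 2) := by simp [xStar, e]
  have h := norm_sub_xStar d lam (xStar d lam)
  rw [a0] at h
  simp at h
  unfold WW
  rw [← h, a0, Real.sq_sqrt hm.le]; ring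

lemma WW_pos (d : ℕ) (lam : ℝ) (hm : 0 < 1 - lam ^ 2) (x : Euc d) (hx : x ∈ Hplus d)
    (hne : x ≠ xStar d lam) : 0 < WW d lam x := by
  have := WW_lower d lam hm x hx
  have h2 : 0 < ‖x - xStar d lam‖ := norm_pos_iff.2 (sub_ne_zero.2 hne)
  have : 0 < ‖x - xStar d lam‖ ^ 2 / 4 := by positivity
  linarith

lemma norm_pos_H {d : ℕ} {x : Euc d} (hx : x ∈ Hplus d) : 0 < ‖x‖ := by
  have hx : 0 < x 0 := hx
  rw [norm_pos_iff]; rintro rfl; simp at hx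

lemma DR_mem {d : ℕ} (lam : ℝ) {x : Euc d} (hx : x ∈ Hplus d) : DR d lam x ∈ Hplus d := by
  show 0 < DR d lam x 0
  rw [DR_zero]; exact div_pos hx (norm_pos_H hx)

/-- decrease, in normalised coordinates -/
lemma decrease (d : ℕ) (lam : ℝ) (hm : 0 < 1 - lam ^ 2) (x : Euc d) (hx : x ∈ Hplus d) :
    ∃ r c s : ℝ, 0 < r ∧ 0 < c ∧ c ^ 2 + s ^ 2 ≤ 1 ∧ ‖x‖ = r ∧ x 0 = r * c ∧ x 1 = r * s ∧
      c ^ 2 * (r - 1) ^ 2 / 4 + r / 2 * (1 - c ^ 2 + lam ^ 2 - 2 * lam * s)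
        ≤ WW d lam x - WW d lam (DR d lam x) := by
  have hr := norm_pos_H hx
  have hx : 0 < x 0 := hx
  have h := norm_sq_split d x
  have hS : 0 ≤ ∑ i : Fin d, x i.succ.succ ^ 2 := Finset.sum_nonneg fun i _ => sq_nonneg _
  have hkD := kk_DR d lam x
  have hkx : kk d lam x = ‖x‖ ^ 2 - x 0 ^ 2 - 2 * lam * x 1 + lam ^ 2 := rfl
  have hD0 := DR_zero d lam x
  set r := ‖x‖ with hrd
  obtain ⟨c, hc⟩ : ∃ c, c = x 0 / r := ⟨_, rfl⟩
  obtain ⟨s, hs⟩ : ∃ s, s = x 1 / r := ⟨_, rfl⟩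
  have hx0 : x 0 = r * c := by rw [hc]; field_simp
  have hx1 : x 1 = r * s := by rw [hs]; field_simp
  have hc0 : 0 < c := by rw [hc]; positivity
  refine ⟨r, c, s, hr, hc0, ?_, rfl, hx0, hx1, ?_⟩
  · rw [hx0, hx1] at h
    have : r ^ 2 * (c ^ 2 + s ^ 2) ≤ r ^ 2 * 1 := by nlinarith
    exact le_of_mul_le_mul_left this (by positivity)
  · have e1 : kk d lam (DR d lam x) = (r - 1) ^ 2 * (1 - c ^ 2) := by
      rw [hkD, hx0]; field_simp
    unfold WW
    rw [e1, hkx, hD0, ← hc, hx0, hx1, Real.log_mul hr.ne' hc0.ne']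
    have hl := Real.log_le_sub_one_of_pos hr
    have := mul_le_mul_of_nonneg_left hl hm.le
    nlinarith

lemma Q_lower (lam c s : ℝ) (hm : 0 < 1 - lam ^ 2) (h : c ^ 2 + s ^ 2 ≤ 1) :
    (1 - c ^ 2 - lam ^ 2) ^ 2 ≤ 4 * (1 - c ^ 2 + lam ^ 2 - 2 * lam * s) := by
  set S := 1 - c ^ 2 with hS
  have hSs : s ^ 2 ≤ S := by linarith
  have hS1 : S ≤ 1 := by nlinarith
  have a : 0 ≤ S + lam ^ 2 - 2 * lam * s := by nlinarith [sq_nonneg (s - lam)]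
  have b : S + lam ^ 2 + 2 * lam * s ≤ 4 := by nlinarith [sq_nonneg (s - lam)]
  have c1 : (S + lam ^ 2 - 2 * lam * s) * (S + lam ^ 2 + 2 * lam * s) ≤
    (S + lam ^ 2 - 2 * lam * s) * 4 := mul_le_mul_of_nonneg_left b a
  have c2 : lam ^ 2 * s ^ 2 ≤ lam ^ 2 * S := mul_le_mul_of_nonneg_left hSs (sq_nonneg _)
  nlinarith

lemma DD_ge_EE (d : ℕ) (lam : ℝ) (hm : 0 < 1 - lam ^ 2) (x : Euc d) (hx : x ∈ Hplus d) :
    EE d lam (DR d lam x) ≤ WW d lam x - WW d lam (DR d lam x) := by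
  obtain ⟨r, c, s, hr, hc, hcs, hn, hx0, hx1, h⟩ := decrease d lam hm x hx
  refine le_trans ?_ h
  have hQ := Q_lower lam c s hm hcs
  have e0 : DR d lam x 0 = c := by rw [DR_zero, hn, hx0]; field_simp
  have e1 : kk d lam (DR d lam x) = (r - 1) ^ 2 * (1 - c ^ 2) := by
    rw [kk_DR, hn, hx0]; field_simp
  unfold EE
  rw [e0, e1]
  set Q := 1 - c ^ 2 + lam ^ 2 - 2 * lam * s
  set P := 1 - c ^ 2 - lam ^ 2 with hP
  have hQ0 : 0 ≤ Q := by nlinarith [sq_nonneg P]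
  have hc1 : c ^ 2 ≤ 1 := by nlinarith [sq_nonneg s]
  have hP1 : P ^ 2 ≤ 1 := by
    rw [sq_le_one_iff_abs_le_one, abs_le]; constructor <;> nlinarith [sq_nonneg lam, sq_nonneg c]
  have hc20 : 0 ≤ c ^ 2 := sq_nonneg c
  have k1 : c ^ 2 * ((r - 1) ^ 2 * (1 - c ^ 2)) ≤ c ^ 2 * (r - 1) ^ 2 := by
    have : (r - 1) ^ 2 * (1 - c ^ 2) ≤ (r - 1) ^ 2 * 1 :=
      mul_le_mul_of_nonneg_left (by linarith) (sq_nonneg _)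
    nlinarith
  have hrQ : 0 ≤ r / 2 * Q := by positivity
  have k2 : c ^ 2 * P ^ 2 / 16 ≤ c ^ 2 * (r - 1) ^ 2 / 4 + r / 2 * Q := by
    rcases le_total r (1/2) with h' | h'
    · have : 1 / 4 ≤ (r - 1) ^ 2 := by nlinarith
      have a1 : c ^ 2 * (1/4) ≤ c ^ 2 * (r-1) ^ 2 := mul_le_mul_of_nonneg_left this hc20
      have a2 : c ^ 2 * P ^ 2 ≤ c ^ 2 * 1 := mul_le_mul_of_nonneg_left hP1 hc20
      linarith
    · have a1 : 1/2 * Q ≤ r * Q := mul_le_mul_of_nonneg_right h' hQ0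
      have a2 : c ^ 2 * P ^ 2 ≤ 1 * P ^ 2 := mul_le_mul_of_nonneg_right hc1 (sq_nonneg _)
      have a3 : 0 ≤ c ^ 2 * (r - 1) ^ 2 := by positivity
      linarith
  have k3 : 0 ≤ c ^ 2 * (r - 1) ^ 2 := by positivity
  nlinarith

lemma EE_nonneg (d : ℕ) (lam : ℝ) (x : Euc d) : 0 ≤ EE d lam x := by
  have := (sq_nonneg _).trans (kk_lower d lam x)
  unfold EE; positivity

lemma eq_star (d : ℕ) (lam : ℝ) (x : Euc d) (hx : x ∈ Hplus d)
    (h1 : kk d lam x = 0) (h2 : 1 - x 0 ^ 2 - lam ^ 2 = 0) : x = xStar d lam := by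
  have hx : 0 < x 0 := hx
  have h := norm_sub_xStar d lam x
  have : Real.sqrt (1 - lam ^ 2) = x 0 := by
    rw [show 1 - lam ^ 2 = x 0 ^ 2 by linarith, Real.sqrt_sq hx.le]
  rw [h1, this] at h
  simp at h
  exact sub_eq_zero.1 h

lemma EE_pos (d : ℕ) (lam : ℝ) (x : Euc d) (hx : x ∈ Hplus d) (hne : x ≠ xStar d lam) :
    0 < EE d lam x := by
  have hx0 : 0 < x 0 := hx
  have hk := (sq_nonneg _).trans (kk_lower d lam x)
  by_contra hcon
  have h0 : (1 - x 0 ^ 2 - lam ^ 2) ^ 2 + kk d lam x ≤ 0 := by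
    by_contra h'
    push Not at h'
    apply hcon
    unfold EE; positivity
  have hP := sq_nonneg (1 - x 0 ^ 2 - lam ^ 2)
  exact hne (eq_star d lam x hx (by linarith) (by
    have : (1 - x 0 ^ 2 - lam ^ 2) ^ 2 = 0 := by linarith
    exact pow_eq_zero_iff (two_ne_zero) |>.1 this))

lemma DD_pos (d : ℕ) (lam : ℝ) (hm : 0 < 1 - lam ^ 2) (x : Euc d) (hx : x ∈ Hplus d)
    (hne : x ≠ xStar d lam) : 0 < WW d lam x - WW d lam (DR d lam x) := by
  obtain ⟨r, c, s, hr, hc, hcs, hn, hx0, hx1, h⟩ := decrease d lam hm x hx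
  have hQ := Q_lower lam c s hm hcs
  by_contra hcon
  have hQ0 : 0 ≤ 1 - c ^ 2 + lam ^ 2 - 2 * lam * s := by
    nlinarith [sq_nonneg (1 - c ^ 2 - lam ^ 2)]
  have a1 : 0 ≤ r / 2 * (1 - c ^ 2 + lam ^ 2 - 2 * lam * s) := by positivity
  have a2 : 0 ≤ c ^ 2 * (r - 1) ^ 2 / 4 := by positivity
  have b1 : r / 2 * (1 - c ^ 2 + lam ^ 2 - 2 * lam * s) = 0 := by linarith
  have b2 : c ^ 2 * (r - 1) ^ 2 / 4 = 0 := by linarith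
  have c1 : 1 - c ^ 2 + lam ^ 2 - 2 * lam * s = 0 := by
    rcases mul_eq_zero.1 b1 with h | h
    · linarith
    · exact h
  have c2 : r = 1 := by
    have : (r - 1) ^ 2 = 0 := by
      rcases mul_eq_zero.1 (show c ^ 2 * (r - 1) ^ 2 = 0 by linarith) with h | h
      · exact absurd h (by positivity)
      · exact h
    have := pow_eq_zero_iff (two_ne_zero) |>.1 this
    linarith
  subst c2
  have c3 : (1 - c ^ 2 - lam ^ 2) ^ 2 = 0 := le_antisymm (by linarith) (sq_nonneg _)
  have c3 := pow_eq_zero_iff (two_ne_zero) |>.1 c3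
  refine hne (eq_star d lam x hx ?_ ?_)
  · unfold kk; rw [hn, hx0, hx1]; linarith
  · rw [hx0]; linarith

lemma isOpen_H (d : ℕ) : IsOpen (Hplus d) :=
  isOpen_lt continuous_const (by fun_prop)

lemma cont_kk (d : ℕ) (lam : ℝ) : Continuous (kk d lam) := by
  unfold kk; fun_prop

lemma cont_EE (d : ℕ) (lam : ℝ) : Continuous (EE d lam) := by
  have := cont_kk d lam
  unfold EE; fun_prop

lemma cont_WW (d : ℕ) (lam : ℝ) : ContinuousOn (WW d lam) (Hplus d) := by
  have := cont_kk d lam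
  have hl : ContinuousOn (fun x : Euc d => Real.log (x 0)) (Hplus d) :=
    ContinuousOn.log (by fun_prop) (fun x hx => ne_of_gt hx)
  unfold WW
  fun_prop

lemma cont_DR (d : ℕ) (lam : ℝ) : ContinuousOn (DR d lam) (Hplus d) := by
  have h1 : ContinuousOn (fun x : Euc d => 1 / ‖x‖) (Hplus d) :=
    ContinuousOn.div (by fun_prop) (by fun_prop) (fun x hx => (norm_pos_H hx).ne')
  have h2 : ContinuousOn (fun x : Euc d => x 0 / ‖x‖) (Hplus d) :=
    ContinuousOn.div (by fun_prop) (by fun_prop) (fun x hx => (norm_pos_H hx).ne')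
  unfold DR
  fun_prop

def DD (d : ℕ) (lam : ℝ) (x : Euc d) : ℝ := WW d lam x - WW d lam (DR d lam x)

lemma cont_DD (d : ℕ) (lam : ℝ) : ContinuousOn (DD d lam) (Hplus d) :=
  (cont_WW d lam).sub ((cont_WW d lam).comp (cont_DR d lam) (fun _ hx => DR_mem lam hx))

def Om (d : ℕ) (lam : ℝ) : Set (Euc d × Euc d) :=
  {q | (q.1 ∈ Hplus d ∧ q.2 ∈ Hplus d) ∧
    0 < min (WW d lam q.1 - (WW d lam q.2 - DD d lam q.2 / 3))
      (WW d lam q.1 + EE d lam q.1 / 3 - WW d lam q.2)}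

lemma isOpen_Om (d : ℕ) (lam : ℝ) : IsOpen (Om d lam) := by
  have hH : IsOpen (Hplus d ×ˢ Hplus d) := (isOpen_H d).prod (isOpen_H d)
  have m1 : MapsTo Prod.fst (Hplus d ×ˢ Hplus d) (Hplus d) := fun q hq => hq.1
  have m2 : MapsTo Prod.snd (Hplus d ×ˢ Hplus d) (Hplus d) := fun q hq => hq.2
  have w1 : ContinuousOn (fun q : Euc d × Euc d => WW d lam q.1) (Hplus d ×ˢ Hplus d) :=
    (cont_WW d lam).comp continuousOn_fst m1
  have w2 : ContinuousOn (fun q : Euc d × Euc d => WW d lam q.2) (Hplus d ×ˢ Hplus d) :=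
    (cont_WW d lam).comp continuousOn_snd m2
  have w3 : ContinuousOn (fun q : Euc d × Euc d => DD d lam q.2) (Hplus d ×ˢ Hplus d) :=
    (cont_DD d lam).comp continuousOn_snd m2
  have w4 : ContinuousOn (fun q : Euc d × Euc d => EE d lam q.1) (Hplus d ×ˢ Hplus d) :=
    (cont_EE d lam).comp_continuousOn continuousOn_fst
  have := ContinuousOn.isOpen_inter_preimage (f := fun q : Euc d × Euc d =>
    min (WW d lam q.1 - (WW d lam q.2 - DD d lam q.2 / 3))
      (WW d lam q.1 + EE d lam q.1 / 3 - WW d lam q.2)) (by fun_prop) hH (isOpen_Ioi (a := (0:ℝ)))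
  exact this

def tau (d : ℕ) (lam : ℝ) (x : Euc d) : ℝ := infDist (x, x) (Om d lam)ᶜ / 2

lemma cont_tau (d : ℕ) (lam : ℝ) : Continuous (tau d lam) := by
  have h : Continuous (fun x : Euc d => infDist (x, x) (Om d lam)ᶜ) :=
    (continuous_infDist_pt _).comp (by fun_prop)
  exact h.div_const 2

lemma tau_nonneg (d : ℕ) (lam : ℝ) (x : Euc d) : 0 ≤ tau d lam x :=
  div_nonneg infDist_nonneg (by norm_num)

lemma star_notMem (d : ℕ) (lam : ℝ) : (xStar d lam, xStar d lam) ∈ (Om d lam)ᶜ := by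
  rintro ⟨hh, h⟩
  have h2 := (lt_min_iff.1 h).2
  have h := norm_sub_xStar d lam (xStar d lam)
  have a0 : xStar d lam 0 = Real.sqrt (1 - lam ^ 2) := by simp [xStar, e]
  rw [a0] at h
  simp at h
  have hpos : 0 < Real.sqrt (1 - lam ^ 2) := by
    have : 0 < xStar d lam 0 := hh.1
    rwa [a0] at this
  have h3 : EE d lam (xStar d lam) = 0 := by
    unfold EE
    rw [← h, a0, Real.sq_sqrt (Real.sqrt_pos.1 hpos).le]; ring
  simp only [h3] at h2
  linarith

lemma tau_star (d : ℕ) (lam : ℝ) : tau d lam (xStar d lam) = 0 := by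
  unfold tau
  rw [infDist_zero_of_mem (star_notMem d lam)]; simp

lemma tau_pos (d : ℕ) (lam : ℝ) (hm : 0 < 1 - lam ^ 2) (x : Euc d) (hx : x ∈ Hplus d)
    (hne : x ≠ xStar d lam) : 0 < tau d lam x := by
  have hmem : (x, x) ∈ Om d lam := by
    refine ⟨⟨hx, hx⟩, lt_min ?_ ?_⟩
    · have : 0 < DD d lam x := DD_pos d lam hm x hx hne
      simp only; linarith
    · have := EE_pos d lam x hx hne
      simp only; linarith
  have := ((isOpen_Om d lam).isClosed_compl.notMem_iff_infDist_pos
    ⟨_, star_notMem d lam⟩).1 (not_not.2 hmem)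
  unfold tau; linarith

lemma tau_ball (d : ℕ) (lam : ℝ) (hm : 0 < 1 - lam ^ 2) (x y : Euc d) (hx : x ∈ Hplus d)
    (hne : x ≠ xStar d lam) (hy : y ∈ closedBall x (tau d lam x)) : (x, y) ∈ Om d lam := by
  by_contra h
  have h1 : infDist (x, x) (Om d lam)ᶜ ≤ dist (x, x) (x, y) := infDist_le_dist_of_mem h
  have h2 := tau_pos d lam hm x hx hne
  have h3 : dist (x, x) (x, y) = dist y x := by simp [Prod.dist_eq, dist_comm]
  rw [mem_closedBall] at hy
  unfold tau at *
  linarith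

lemma tau_ball_star (d : ℕ) (lam : ℝ) (y : Euc d)
    (hy : y ∈ closedBall (xStar d lam) (tau d lam (xStar d lam))) : y = xStar d lam := by
  rw [tau_star] at hy; simpa using hy

lemma tau_ball_H (d : ℕ) (lam : ℝ) (hm : 0 < 1 - lam ^ 2) (x : Euc d) (hx : x ∈ Hplus d) :
    closedBall x (tau d lam x) ⊆ Hplus d := by
  intro y hy
  by_cases hne : x = xStar d lam
  · subst hne
    rw [tau_ball_star d lam y hy]; exact hx
  · exact (tau_ball d lam hm x y hx hne hy).1.2

lemma step_aux (d : ℕ) (lam : ℝ) (hm : 0 < 1 - lam ^ 2) (y z : Euc d)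
    (hy : y ∈ Hplus d) (hz : z ∈ closedBall (DR d lam y) (tau d lam (DR d lam y))) :
    WW d lam z ≤ WW d lam y - DD d lam y / 3 := by
  have hE : EE d lam (DR d lam y) ≤ DD d lam y := DD_ge_EE d lam hm y hy
  have h0 := EE_nonneg d lam (DR d lam y)
  have hD : DD d lam y = WW d lam y - WW d lam (DR d lam y) := rfl
  by_cases hne : DR d lam y = xStar d lam
  · rw [hne] at hz hD hE h0
    rw [tau_ball_star d lam z hz]
    linarith
  · have := (lt_min_iff.1 (tau_ball d lam hm _ z (DR_mem lam hy) hne hz).2).2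
    simp only at this
    linarith

lemma step_lt (d : ℕ) (lam : ℝ) (hm : 0 < 1 - lam ^ 2) (x y z : Euc d)
    (hx : x ∈ Hplus d) (hne : x ≠ xStar d lam) (hy : y ∈ closedBall x (tau d lam x))
    (hz : z ∈ closedBall (DR d lam y) (tau d lam (DR d lam y))) :
    WW d lam z < WW d lam x := by
  have h1 := step_aux d lam hm y z (tau_ball_H d lam hm x hx hy) hz
  have := (lt_min_iff.1 (tau_ball d lam hm x y hx hne hy).2).1
  simp only at this
  linarith

lemma step_le (d : ℕ) (lam : ℝ) (hm : 0 < 1 - lam ^ 2) (x y z : Euc d)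
    (hx : x ∈ Hplus d) (hy : y ∈ closedBall x (tau d lam x))
    (hz : z ∈ closedBall (DR d lam y) (tau d lam (DR d lam y))) :
    WW d lam z ≤ WW d lam x := by
  by_cases hne : x = xStar d lam
  · subst hne
    have hy := tau_ball_star d lam y hy
    subst hy
    have h1 := step_aux d lam hm _ z hx hz
    have h2 : EE d lam (DR d lam (xStar d lam)) ≤ DD d lam (xStar d lam) :=
      DD_ge_EE d lam hm _ hx
    have h0 := EE_nonneg d lam (DR d lam (xStar d lam))
    linarith
  · exact (step_lt d lam hm x y z hx hne hy hz).le

lemma compact_annulus (d : ℕ) (lam : ℝ) (hm : 0 < 1 - lam ^ 2) (η v : ℝ) :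
    IsCompact {x : Euc d | x ∈ Hplus d ∧ WW d lam x ∈ Icc η v} := by
  set C := (1 - lam ^ 2) / 4 - (1 - lam ^ 2) / 2 * Real.log (Real.sqrt (1 - lam ^ 2)) with hC
  set a := Real.exp (-(2 * (v + C) / (1 - lam ^ 2)))
  have ha : 0 < a := Real.exp_pos _
  set A : Set (Euc d) := closedBall (xStar d lam) (Real.sqrt (4 * v)) ∩ {x | a ≤ x 0} with hA
  have hAc : IsCompact A :=
    (isCompact_closedBall _ _).inter_right (isClosed_le continuous_const (by fun_prop))
  have hAH : A ⊆ Hplus d := fun x hx => lt_of_lt_of_le ha hx.2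
  have hcl : IsClosed (A ∩ WW d lam ⁻¹' Icc η v) :=
    ((cont_WW d lam).mono hAH).preimage_isClosed_of_isClosed hAc.isClosed isClosed_Icc
  have hco : IsCompact (A ∩ WW d lam ⁻¹' Icc η v) := hAc.of_isClosed_subset hcl inter_subset_left
  convert hco using 1
  ext x
  constructor
  · rintro ⟨hx, hW⟩
    refine ⟨⟨?_, ?_⟩, hW⟩
    · rw [mem_closedBall, dist_eq_norm]
      apply Real.le_sqrt_of_sq_le
      have := WW_lower d lam hm x hx
      have := hW.2
      linarith
    · have hx : 0 < x 0 := hx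
      show a ≤ x 0
      rw [← Real.le_log_iff_exp_le hx]
      have hk := (sq_nonneg _).trans (kk_lower d lam x)
      have hv := hW.2
      unfold WW at hv
      rw [← hC] at hv
      rw [neg_le, ← sub_nonneg]
      have : 2 * (v + C) / (1 - lam ^ 2) - -Real.log (x 0) =
        (2 * (v + C) + (1 - lam ^ 2) * Real.log (x 0)) / (1 - lam ^ 2) := by
        field_simp
        ring
      rw [this]
      apply div_nonneg _ hm.le
      nlinarith [sq_nonneg (x 0)]
  · rintro ⟨hx, hW⟩
    exact ⟨hAH hx, hW⟩

lemma ball_param (d : ℕ) (x y : Euc d) (t : ℝ) (hy : y ∈ closedBall x t) :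
    ∃ b ∈ closedBall (0 : Euc d) 1, y = x + t • b := by
  rw [mem_closedBall, dist_eq_norm] at hy
  have ht : 0 ≤ t := (norm_nonneg _).trans hy
  rcases ht.eq_or_lt with h | h
  · subst h
    refine ⟨0, by simp, ?_⟩
    have := norm_le_zero_iff.1 hy
    simpa using sub_eq_zero.1 this
  · refine ⟨t⁻¹ • (y - x), ?_, ?_⟩
    · rw [mem_closedBall_zero_iff, norm_smul, norm_inv, Real.norm_of_nonneg ht,
        inv_mul_le_one₀ h]
      exact hy
    · rw [smul_inv_smul₀ h.ne']; abel

lemma param_ball (d : ℕ) (x b : Euc d) (t : ℝ) (ht : 0 ≤ t) (hb : b ∈ closedBall (0 : Euc d) 1) :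
    x + t • b ∈ closedBall x t := by
  rw [mem_closedBall_zero_iff] at hb
  rw [mem_closedBall, dist_eq_norm, add_sub_cancel_left, norm_smul, Real.norm_of_nonneg ht]
  nlinarith

lemma unif_decrease (d : ℕ) (lam : ℝ) (hm : 0 < 1 - lam ^ 2) (η v : ℝ) (hη : 0 < η) :
    ∃ κ > 0, ∀ x y z : Euc d, x ∈ Hplus d → WW d lam x ∈ Icc η v →
      y ∈ closedBall x (tau d lam x) →
      z ∈ closedBall (DR d lam y) (tau d lam (DR d lam y)) → WW d lam z ≤ WW d lam x - κ := by
  set A := {x : Euc d | x ∈ Hplus d ∧ WW d lam x ∈ Icc η v} with hA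
  set B := closedBall (0 : Euc d) 1 with hB
  set S := A ×ˢ (B ×ˢ B) with hS
  have hSc : IsCompact S := (compact_annulus d lam hm η v).prod
    ((isCompact_closedBall _ _).prod (isCompact_closedBall _ _))
  let Y : Euc d × Euc d × Euc d → Euc d := fun q => q.1 + tau d lam q.1 • q.2.1
  let Z : Euc d × Euc d × Euc d → Euc d := fun q =>
    DR d lam (Y q) + tau d lam (DR d lam (Y q)) • q.2.2
  have hYb : ∀ q ∈ S, Y q ∈ closedBall q.1 (tau d lam q.1) := fun q hq =>
    param_ball d _ _ _ (tau_nonneg d lam _) hq.2.1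
  have hZb : ∀ q ∈ S, Z q ∈ closedBall (DR d lam (Y q)) (tau d lam (DR d lam (Y q))) :=
    fun q hq => param_ball d _ _ _ (tau_nonneg d lam _) hq.2.2
  have hYH : ∀ q ∈ S, Y q ∈ Hplus d := fun q hq =>
    tau_ball_H d lam hm _ hq.1.1 (hYb q hq)
  have hZH : ∀ q ∈ S, Z q ∈ Hplus d := fun q hq =>
    tau_ball_H d lam hm _ (DR_mem lam (hYH q hq)) (hZb q hq)
  have ct := cont_tau d lam
  have cY : ContinuousOn Y S := by
    apply Continuous.continuousOn; fun_prop
  have cTY : ContinuousOn (fun q => DR d lam (Y q)) S := (cont_DR d lam).comp cY hYH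
  have cZ : ContinuousOn Z S :=
    cTY.add ((ct.comp_continuousOn cTY).smul (by fun_prop))
  have cf : ContinuousOn (fun q : Euc d × Euc d × Euc d => WW d lam q.1 - WW d lam (Z q)) S :=
    ((cont_WW d lam).comp continuousOn_fst (fun q hq => hq.1.1)).sub
      ((cont_WW d lam).comp cZ hZH)
  have hne : ∀ x ∈ A, x ≠ xStar d lam := by
    rintro x hx rfl
    have := hx.2.1
    rw [WW_star d lam hm] at this
    linarith
  have key : ∃ κ > 0, ∀ q ∈ S, κ ≤ WW d lam q.1 - WW d lam (Z q) := by
    rcases S.eq_empty_or_nonempty with h | h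
    · exact ⟨1, one_pos, by simp [h]⟩
    · obtain ⟨q, hq, hmin⟩ := hSc.exists_isMinOn h cf
      refine ⟨_, ?_, fun q' hq' => hmin hq'⟩
      have := step_lt d lam hm q.1 (Y q) (Z q) hq.1.1 (hne _ hq.1) (hYb q hq) (hZb q hq)
      simp only [gt_iff_lt, sub_pos]
      exact this
  obtain ⟨κ, hκ, hall⟩ := key
  refine ⟨κ, hκ, fun x y z hx hW hy hz => ?_⟩
  obtain ⟨b, hb, rfl⟩ := ball_param d x y _ hy
  obtain ⟨b', hb', hz'⟩ := ball_param d _ z _ hz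
  have := hall (x, b, b') ⟨⟨hx, hW⟩, hb, hb'⟩
  have hZ : Z (x, b, b') = z := hz'.symm
  rw [hZ] at this
  simp only at this
  linarith

/-- For `λ ∈ [0,1)` there is `τ : H₊ → [0,∞)` with `τ(x) > 0` for
`x ≠ x*` and `B[x,τ(x)] ⊆ H₊`, such that for every compact `K ⊆ H₊` the `τ`-perturbed
Douglas–Rachford iterations starting in `K` converge to `x*` uniformly. -/
theorem stmt17 (d : ℕ) (lam : ℝ) (h0 : 0 ≤ lam) (h1 : lam < 1) :
    ∃ τ : Euc d → ℝ,
      (∀ x ∈ Hplus d, 0 ≤ τ x) ∧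
      (∀ x ∈ Hplus d, x ≠ xStar d lam → 0 < τ x) ∧
      (∀ x ∈ Hplus d, closedBall x (τ x) ⊆ Hplus d) ∧
      ∀ K : Set (Euc d), K ⊆ Hplus d → IsCompact K →
        ∀ ε : ℝ, 0 < ε → ∃ N : ℕ, ∀ n ≥ N, ∀ x ∈ K,
          ∀ φ : ℕ → Euc d, PerturbedSol d (DR d lam) τ x φ →
            ‖φ n - xStar d lam‖ ≤ ε := by
  have hm : 0 < 1 - lam ^ 2 := by nlinarith
  refine ⟨tau d lam, fun x _ => tau_nonneg d lam x, fun x hx hne => tau_pos d lam hm x hx hne,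
    fun x hx => tau_ball_H d lam hm x hx, ?_⟩
  intro K hKH hK ε hε
  obtain ⟨v, hv⟩ : ∃ v, ∀ x ∈ K, WW d lam x ≤ v := by
    obtain ⟨v, hv⟩ := hK.bddAbove_image ((cont_WW d lam).mono hKH)
    exact ⟨v, fun x hx => hv ⟨x, hx, rfl⟩⟩
  obtain ⟨κ, hκ, hdec⟩ := unif_decrease d lam hm (ε ^ 2 / 4) v (by positivity)
  obtain ⟨N, hN⟩ := exists_nat_gt (v / κ)
  refine ⟨N, fun n hn x hx φ hφ => ?_⟩
  obtain ⟨hφ0, hφH, hφs⟩ := hφ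
  have hanti : Antitone (fun n => WW d lam (φ n)) := by
    apply antitone_nat_of_succ_le
    intro n
    obtain ⟨y, hy, hz⟩ := hφs n
    exact step_le d lam hm _ y _ (hφH n) hy hz
  by_contra hcon
  push Not at hcon
  have hlow := WW_lower d lam hm (φ n) (hφH n)
  have hbig : ε ^ 2 / 4 ≤ WW d lam (φ n) := by
    have : ε ^ 2 ≤ ‖φ n - xStar d lam‖ ^ 2 := by gcongr
    linarith
  have hv0 : ∀ m, WW d lam (φ m) ≤ v := fun m =>
    (hanti (Nat.zero_le m)).trans (by simp only; rw [hφ0]; exact hv x hx)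
  have hind : ∀ m ≤ n, WW d lam (φ m) ≤ v - m * κ := by
    intro m
    induction m with
    | zero => intro _; simpa using hv0 0
    | succ m ih =>
      intro hmn
      obtain ⟨y, hy, hz⟩ := hφs m
      have h2 : WW d lam (φ n) ≤ WW d lam (φ m) := hanti (by omega)
      have := hdec (φ m) y _ (hφH m) ⟨hbig.trans h2, hv0 m⟩ hy hz
      have := ih (by omega)
      push_cast
      linarith
  have hfin := hind n le_rfl
  have hNn : (N : ℝ) ≤ n := by exact_mod_cast hn
  rw [div_lt_iff₀ hκ] at hN
  have : (N : ℝ) * κ ≤ n * κ := mul_le_mul_of_nonneg_right hNn hκ.le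
  have : 0 < ε ^ 2 / 4 := by positivity
  linarith
end
end

section
/- Let D ⊆ ℝ^d be open, let T : D → Set(D) be a set-valued map such that T x is non-empty and compact for every x ∈ D, and let ω₁, ω₂ : D → [0,∞) be continuous. Let A = { x ∈ D : ω₁(φ(n)) = 0 for every n ∈ ℕ and every solution φ of the inclusion φ(n+1) ∈ T(φ(n)), φ(0) = x }. Suppose there exists a continuous Lyapunov function V : D → [0,∞): there exist α₁, α₂ : [0,∞) → [0,∞) continuous, strictly increasing, unbounded with α₁(0) = α₂(0) = 0 (class K∞), and a continuous function α : [0,∞) → [0,∞) with α(t) = 0 iff t = 0 (positive definite), such that for all x ∈ D: α₁(ω₁(x)) ≤ V(x) ≤ α₂(ω₂(x)); sup_{y ∈ T x} V(y) ≤ V(x) − α(V(x)); and V(x) = 0 if and only if x ∈ A. Then the difference inclusion x_{n+1} ∈ T x_n is KL-stable with respect to (ω₁, ω₂): there exists a class-KL function β such that ω₁(φ(n)) ≤ β(ω₂(x), n) for every x ∈ D, every n ∈ ℕ, and every solution φ with φ(0) = x and φ(m+1) ∈ T(φ(m)) for all m. -/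
noncomputable section

open Metric Set Filter

/-- A solution of the difference inclusion `x_{n+1} ∈ T x_n` with initial condition `x`. -/
def IsSolution {E : Type*} (T : E → Set E) (x : E) (φ : ℕ → E) : Prop :=
  φ 0 = x ∧ ∀ n : ℕ, φ (n + 1) ∈ T (φ n)

/-- The set `A = {x ∈ D : ω₁(φ(n)) = 0 for every n and every solution φ starting at x}`. -/
def ASet {E : Type*} (D : Set E) (T : E → Set E) (ω₁ : E → ℝ) : Set E :=
  {x | x ∈ D ∧ ∀ φ : ℕ → E, IsSolution T x φ → ∀ n : ℕ, ω₁ (φ n) = 0}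

/-- A function `α : [0,∞) → [0,∞)` of class `K∞`: continuous, strictly increasing,
`α(0) = 0`, and `α(t) → ∞` as `t → ∞`. -/
def IsClassKInf (a : ℝ → ℝ) : Prop :=
  (∀ t : ℝ, 0 ≤ t → 0 ≤ a t) ∧ ContinuousOn a (Ici 0) ∧ StrictMonoOn a (Ici 0) ∧
    a 0 = 0 ∧ Tendsto a atTop atTop

/-- A function `β : [0,∞) × [0,∞) → [0,∞)` is of class `KL` if for every `t ≥ 0` the map
`s ↦ β(s,t)` is continuous, strictly increasing and `β(0,t) = 0`, and for every `s ≥ 0` the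
map `t ↦ β(s,t)` is non-increasing and tends to `0` as `t → ∞`. -/
def IsClassKL (β : ℝ → ℝ → ℝ) : Prop :=
  (∀ s t : ℝ, 0 ≤ s → 0 ≤ t → 0 ≤ β s t) ∧
  (∀ t : ℝ, 0 ≤ t → ContinuousOn (fun s => β s t) (Ici 0)) ∧
  (∀ t : ℝ, 0 ≤ t → StrictMonoOn (fun s => β s t) (Ici 0)) ∧
  (∀ t : ℝ, 0 ≤ t → β 0 t = 0) ∧
  (∀ s : ℝ, 0 ≤ s → AntitoneOn (fun t => β s t) (Ici 0)) ∧
  (∀ s : ℝ, 0 ≤ s → Tendsto (fun t => β s t) atTop (nhds 0))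

open Topology in
theorem aux_g (α : ℝ → ℝ) (hαnn : ∀ t : ℝ, 0 ≤ t → 0 ≤ α t)
    (hαcont : ContinuousOn α (Ici 0))
    (hαpd : ∀ t : ℝ, 0 ≤ t → (α t = 0 ↔ t = 0)) :
    ∃ g : ℝ → ℝ, Continuous g ∧ MonotoneOn g (Ici 0) ∧ g 0 = 0 ∧ (∀ s, 0 ≤ s → 0 ≤ g s) ∧
      (∀ s, 0 < s → g s < s) ∧ (∀ s, 0 ≤ s → s - α s ≤ g s) := by
  have hA : Continuous (fun u : ℝ => α (max u 0)) :=
    hαcont.comp_continuous (by fun_prop) (fun x => mem_Ici.2 (le_max_right _ _))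
  set h : ℝ → ℝ := fun u => max (u - α (max u 0)) 0 with hh
  have hc : Continuous h := (continuous_id.sub hA).max continuous_const
  have hle : ∀ u, 0 ≤ u → h u ≤ u := by
    intro u hu
    simp only [hh, max_eq_left hu]
    exact max_le (by linarith [hαnn u hu]) hu
  have hlt : ∀ u, 0 < u → h u < u := by
    intro u hu
    simp only [hh, max_eq_left hu.le]
    have h1 : α u ≠ 0 := fun h0 => hu.ne' ((hαpd u hu.le).1 h0)
    have h2 := lt_of_le_of_ne (hαnn u hu.le) h1.symm
    exact max_lt (by linarith) hu
  have hnn : ∀ u, 0 ≤ h u := fun u => le_max_right _ _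
  have hbdd : ∀ s : ℝ, BddAbove ((fun u => h (s * u)) '' Icc (0:ℝ) 1) := fun s =>
    (isCompact_Icc.image (by fun_prop)).bddAbove
  have hmem : ∀ s : ℝ, ∀ u ∈ Icc (0:ℝ) 1, h (s * u) ≤ sSup ((fun u => h (s * u)) '' Icc (0:ℝ) 1) :=
    fun s u hu => le_csSup (hbdd s) (mem_image_of_mem _ hu)
  have hatt : ∀ s : ℝ, ∃ u ∈ Icc (0:ℝ) 1, sSup ((fun u => h (s * u)) '' Icc (0:ℝ) 1) = h (s * u) :=
    fun s => isCompact_Icc.exists_sSup_image_eq (by simp) (by fun_prop)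
  have h0 : h 0 = 0 := le_antisymm (hle 0 le_rfl) (hnn 0)
  refine ⟨fun s => sSup ((fun u => h (s * u)) '' Icc (0:ℝ) 1), ?_, ?_, ?_, ?_, ?_, ?_⟩
  · exact isCompact_Icc.continuous_sSup (f := fun s u => h (s * u)) (by
      show Continuous (fun p : ℝ × ℝ => h (p.1 * p.2))
      fun_prop)
  · intro s hs s' hs' hss
    simp only [mem_Ici] at hs hs'
    obtain ⟨u, hu, he⟩ := hatt s
    simp only [he]
    rcases hs'.eq_or_lt with h1 | h1
    · have : s = 0 := by linarith
      subst this; subst h1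
      simpa using hmem 0 u hu
    · have := hmem s' (s * u / s') ⟨div_nonneg (mul_nonneg hs hu.1) hs', by
        rw [div_le_one h1]; nlinarith [hu.1, hu.2]⟩
      rwa [mul_div_cancel₀ _ h1.ne'] at this
  · obtain ⟨u, hu, he⟩ := hatt 0
    exact he.trans (by rw [zero_mul, h0])
  · intro s hs
    exact (hnn _).trans (hmem s 0 (by simp))
  · intro s hs
    obtain ⟨u, hu, he⟩ := hatt s
    simp only [he]
    rcases hu.1.eq_or_lt with h1 | h1
    · subst h1; simpa [h0] using hs
    · exact (hlt _ (mul_pos hs h1)).trans_le (by nlinarith [hu.2])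
  · intro s hs
    have := hmem s 1 (by simp)
    refine le_trans ?_ this
    simp only [hh, mul_one, max_eq_left hs]
    exact le_max_left _ _

theorem aux_inv (a : ℝ → ℝ) (ha : IsClassKInf a) :
    ∃ γ : ℝ → ℝ, Continuous γ ∧ StrictMono γ ∧ γ 0 = 0 ∧ ∀ t, 0 ≤ t → γ (a t) = t := by
  obtain ⟨hnn, hc, hm, h0, ht⟩ := ha
  set b : ℝ → ℝ := fun t => a (max t 0) + min t 0 with hb
  have hbc : Continuous b :=
    (hc.comp_continuous (by fun_prop) (fun x => mem_Ici.2 (le_max_right _ _))).add (by fun_prop)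
  have hbm : StrictMono b := by
    intro s t hst
    simp only [hb]
    rcases le_total t 0 with h | h
    · rw [max_eq_right h, max_eq_right (hst.le.trans h), min_eq_left h,
        min_eq_left (hst.le.trans h)]
      linarith
    · rw [max_eq_left h, min_eq_right h]
      rcases le_or_gt 0 s with h' | h'
      · rw [max_eq_left h', min_eq_right h']
        have := hm (mem_Ici.2 h') (mem_Ici.2 h) hst
        linarith
      · rw [max_eq_right h'.le, min_eq_left h'.le, h0]
        linarith [hnn t h]
  have hbs : Function.Surjective b := by
    refine hbc.surjective ?_ ?_
    · refine ht.congr' ?_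
      filter_upwards [eventually_ge_atTop 0] with t h
      simp [hb, h]
    · refine tendsto_id.congr' ?_
      filter_upwards [eventually_le_atBot 0] with t h
      simp [hb, h, h0]
  let e := StrictMono.orderIsoOfSurjective b hbm hbs
  have he : ∀ t, 0 ≤ t → e.symm (a t) = t := by
    intro t h
    rw [OrderIso.symm_apply_eq]
    show a t = b t
    simp [hb, h]
  refine ⟨e.symm, e.symm.continuous, e.symm.strictMono, ?_, he⟩
  have := he 0 le_rfl
  rwa [h0] at this

/-- Kellett–Teel, Thm. 2.8, unperturbed consequence. If `D ⊆ ℝ^d` is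
open, `T : D ⇉ D` has non-empty compact values, `ω₁, ω₂ : D → [0,∞)` are continuous, and
there is a continuous Lyapunov function `V` with respect to `(ω₁, ω₂)`, then the difference
inclusion `x_{n+1} ∈ T x_n` is `KL`-stable with respect to `(ω₁, ω₂)`. -/
theorem stmt19 (d : ℕ) (D : Set (EuclideanSpace ℝ (Fin d)))
    (T : EuclideanSpace ℝ (Fin d) → Set (EuclideanSpace ℝ (Fin d)))
    (ω₁ ω₂ V : EuclideanSpace ℝ (Fin d) → ℝ)
    (hD : IsOpen D)
    (hTne : ∀ x ∈ D, (T x).Nonempty)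
    (hTcpt : ∀ x ∈ D, IsCompact (T x))
    (hTD : ∀ x ∈ D, T x ⊆ D)
    (hw1 : ContinuousOn ω₁ D) (hw2 : ContinuousOn ω₂ D)
    (hw1nn : ∀ x ∈ D, 0 ≤ ω₁ x) (hw2nn : ∀ x ∈ D, 0 ≤ ω₂ x)
    (hVcont : ContinuousOn V D) (hVnn : ∀ x ∈ D, 0 ≤ V x)
    (α₁ α₂ : ℝ → ℝ) (hα₁ : IsClassKInf α₁) (hα₂ : IsClassKInf α₂)
    (α : ℝ → ℝ) (hαnn : ∀ t : ℝ, 0 ≤ t → 0 ≤ α t)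
    (hαcont : ContinuousOn α (Ici 0))
    (hαpd : ∀ t : ℝ, 0 ≤ t → (α t = 0 ↔ t = 0))
    (hsand : ∀ x ∈ D, α₁ (ω₁ x) ≤ V x ∧ V x ≤ α₂ (ω₂ x))
    (hdec : ∀ x ∈ D, ∀ y ∈ T x, V y ≤ V x - α (V x))
    (hzero : ∀ x ∈ D, (V x = 0 ↔ x ∈ ASet D T ω₁)) :
    ∃ β : ℝ → ℝ → ℝ, IsClassKL β ∧
      ∀ x ∈ D, ∀ φ : ℕ → EuclideanSpace ℝ (Fin d), IsSolution T x φ →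
        ∀ n : ℕ, ω₁ (φ n) ≤ β (ω₂ x) n := by
  obtain ⟨g, gc, gm, g0, gnn, glt, gge⟩ := aux_g α hαnn hαcont hαpd
  obtain ⟨γ, γc, γm, γ0, γinv⟩ := aux_inv α₁ hα₁
  obtain ⟨a2nn, a2c, a2m, a20, -⟩ := hα₂
  have gle : ∀ s, 0 ≤ s → g s ≤ s := by
    intro s hs
    rcases hs.eq_or_lt with h | h
    · subst h; exact g0.le
    · exact (glt s h).le
  have itnn : ∀ n : ℕ, ∀ s, 0 ≤ s → 0 ≤ g^[n] s := by
    intro n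
    induction n with
    | zero => intro s hs; exact hs
    | succ k ih => intro s hs; rw [Function.iterate_succ_apply']; exact gnn _ (ih s hs)
  have itm : ∀ n : ℕ, ∀ s t, 0 ≤ s → s ≤ t → g^[n] s ≤ g^[n] t := by
    intro n
    induction n with
    | zero => intro s t hs h; exact h
    | succ k ih =>
      intro s t hs h
      rw [Function.iterate_succ_apply', Function.iterate_succ_apply']
      exact gm (itnn k s hs) (itnn k t (hs.trans h)) (ih s t hs h)
  have it0 : ∀ n : ℕ, g^[n] 0 = 0 := fun n => Function.iterate_fixed g0 n
  have itanti : ∀ s, 0 ≤ s → Antitone (fun n : ℕ => g^[n] s) := by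
    intro s hs
    refine antitone_nat_of_succ_le fun n => ?_
    rw [Function.iterate_succ_apply']
    exact gle _ (itnn n s hs)
  have itlim : ∀ s, 0 ≤ s → Tendsto (fun n : ℕ => g^[n] s) atTop (nhds 0) := by
    intro s hs
    have hbd : BddBelow (range (fun n : ℕ => g^[n] s)) :=
      ⟨0, by rintro _ ⟨n, rfl⟩; exact itnn n s hs⟩
    have hl := tendsto_atTop_ciInf (itanti s hs) hbd
    have hL : 0 ≤ ⨅ n : ℕ, g^[n] s := le_ciInf fun n => itnn n s hs
    have hfix : g (⨅ n : ℕ, g^[n] s) = ⨅ n : ℕ, g^[n] s :=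
      isFixedPt_of_tendsto_iterate hl gc.continuousAt
    rcases hL.eq_or_lt with h | h
    · rwa [← h] at hl
    · exact absurd hfix (glt _ h).ne
  refine ⟨fun s t => γ (g^[⌊t⌋₊] (α₂ s) + α₂ s / (1 + t)), ⟨?_, ?_, ?_, ?_, ?_, ?_⟩, ?_⟩
  · intro s t hs ht
    rw [← γ0]
    refine γm.monotone (add_nonneg (itnn _ _ (a2nn s hs)) (div_nonneg (a2nn s hs) (by linarith)))
  · intro t ht
    refine γc.comp_continuousOn ?_
    exact ((gc.iterate _).comp_continuousOn a2c).add (a2c.div_const _)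
  · intro t ht s hs s' hs' hss
    have h1 := a2m hs hs' hss
    have h2 := itm ⌊t⌋₊ _ _ (a2nn s hs) h1.le
    have h3 : α₂ s / (1 + t) < α₂ s' / (1 + t) := div_lt_div_of_pos_right h1 (by linarith)
    exact γm (by linarith)
  · intro t ht
    simp [a20, it0, γ0]
  · intro s hs t ht t' ht' htt
    simp only [mem_Ici] at ht ht'
    refine γm.monotone (add_le_add (itanti _ (a2nn s hs) (Nat.floor_mono htt)) ?_)
    exact div_le_div_of_nonneg_left (a2nn s hs) (by linarith) (by linarith)
  · intro s hs
    have h1 : Tendsto (fun t : ℝ => g^[⌊t⌋₊] (α₂ s)) atTop (nhds 0) :=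
      (itlim _ (a2nn s hs)).comp tendsto_nat_floor_atTop
    have h2 : Tendsto (fun t : ℝ => α₂ s / (1 + t)) atTop (nhds 0) :=
      (tendsto_const_nhds (x := α₂ s)).div_atTop (tendsto_atTop_add_const_left _ 1 tendsto_id)
    have h3 := (γc.tendsto (0 + 0)).comp (h1.add h2)
    rw [add_zero, γ0] at h3
    exact h3
  · intro x hx φ hφ n
    obtain ⟨hφ0, hφs⟩ := hφ
    have hφD : ∀ n, φ n ∈ D := by
      intro n
      induction n with
      | zero => rwa [hφ0]
      | succ k ih => exact hTD _ ih (hφs k)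
    have hV : ∀ n, V (φ n) ≤ g^[n] (α₂ (ω₂ x)) := by
      intro n
      induction n with
      | zero => rw [hφ0]; exact (hsand x hx).2
      | succ k ih =>
        rw [Function.iterate_succ_apply']
        have h1 := hdec _ (hφD k) _ (hφs k)
        have h2 := gge _ (hVnn _ (hφD k))
        have h3 := gm (hVnn _ (hφD k)) (itnn k _ (a2nn _ (hw2nn x hx))) ih
        linarith
    have h1 := (hsand _ (hφD n)).1
    have h2 : 0 ≤ α₂ (ω₂ x) / (1 + (n:ℝ)) := div_nonneg (a2nn _ (hw2nn x hx)) (by positivity)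
    rw [← γinv _ (hw1nn _ (hφD n))]
    refine γm.monotone ?_
    rw [Nat.floor_natCast]
    linarith [hV n]
end
end
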